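/- Let Y ⊂ ℝ^d be a bounded measurable set of positive Lebesgue measure |Y|, and let z_1, …, z_d : ℝ^d → ℝ be C¹, ℤ^d-periodic functions with bounded gradients such that for each i, ∫_Y (∇z_i(y) − e_i)·∇φ(y) dy = 0 for every ℤ^d-periodic C¹ function φ with bounded gradient. Define (M_0)_{ij} = δ_{ij} − (1/|Y|) ∫_Y ∂_{y_i} z_j(y) dy. Then for every vector ξ ∈ ℝ^d: ∫_Y |ξ − Σ_{i=1}^d ξ_i ∇z_i(y)|² dy = |Y| · (ξ · M_0 ξ). -/

import Mathlib

open MeasureTheory RealInnerProductSpace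

/-- A function `f : ℝ^d → ℝ` is `ℤ^d`-periodic if `f (y + k) = f y` for every
integer translation vector `k ∈ ℤ^d`. -/
def ZdPeriodic {d : ℕ} (f : EuclideanSpace ℝ (Fin d) → ℝ) : Prop :=
  ∀ (y : EuclideanSpace ℝ (Fin d)) (k : Fin d → ℤ),
    f (y + (EuclideanSpace.equiv (Fin d) ℝ).symm (fun i => (k i : ℝ))) = f y

/-! Write `wᵢ = eᵢ - ∇zᵢ`. Testing the cell problem for `zⱼ` with `φ = zᵢ` says that `wⱼ` is
orthogonal to `∇zᵢ` in `L²`, so `∫ wᵢ · wⱼ = ∫ eᵢ · wⱼ = |Y| (M₀)ᵢⱼ`: up to the factor `|Y|`, the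
matrix `M₀` is the Gram matrix of the `wᵢ` in `L²`, and its quadratic form is the squared norm of
`∑ᵢ ξᵢ wᵢ`. -/

open scoped Matrix

section InnerProductSpace

variable {α 𝕜 E : Type*} [MeasurableSpace α] {μ : Measure α} [RCLike 𝕜] [NormedAddCommGroup E]

theorem integrable_inner_of_memLp_two [InnerProductSpace 𝕜 E] {f g : α → E} (hf : MemLp f 2 μ)
    (hg : MemLp g 2 μ) : Integrable (fun y => inner 𝕜 (f y) (g y)) μ := by
  refine (L2.integrable_inner (𝕜 := 𝕜) (hf.toLp f) (hg.toLp g)).congr ?_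
  filter_upwards [hf.coeFn_toLp, hg.coeFn_toLp] with y hfy hgy
  rw [hfy, hgy]

theorem integral_inner_sub_left_of_integral_inner_eq_zero [InnerProductSpace 𝕜 E]
    {u f w : α → E} (hu : MemLp u 2 μ) (hf : MemLp f 2 μ) (hw : MemLp w 2 μ)
    (horth : ∫ y, inner 𝕜 (f y) (w y) ∂μ = 0) :
    ∫ y, inner 𝕜 (u y - f y) (w y) ∂μ = ∫ y, inner 𝕜 (u y) (w y) ∂μ := by
  simp_rw [inner_sub_left]
  rw [integral_sub (integrable_inner_of_memLp_two hu hw) (integrable_inner_of_memLp_two hf hw),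
    horth, sub_zero]

theorem integral_norm_sum_smul_sq [InnerProductSpace ℝ E] {ι : Type*} [Fintype ι]
    {w : ι → α → E} (hw : ∀ i, MemLp (w i) 2 μ) (ξ : ι → ℝ) :
    ∫ y, ‖∑ i, ξ i • w i y‖ ^ 2 ∂μ =
      ξ ⬝ᵥ (Matrix.of fun i j => ∫ y, ⟪w i y, w j y⟫ ∂μ) *ᵥ ξ := by
  have hint (i j : ι) : Integrable (fun y => ξ i * (⟪w i y, w j y⟫ * ξ j)) μ :=
    ((integrable_inner_of_memLp_two (hw i) (hw j)).mul_const _).const_mul _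
  have hexpand (y : α) :
      ‖∑ i, ξ i • w i y‖ ^ 2 = ∑ i, ∑ j, ξ i * (⟪w i y, w j y⟫ * ξ j) := by
    simp_rw [← real_inner_self_eq_norm_sq, sum_inner, inner_sum, real_inner_smul_left,
      real_inner_smul_right, mul_comm (ξ _) ⟪_, _⟫]
  simp_rw [hexpand]
  rw [integral_finsetSum _ fun i _ => integrable_finsetSum _ fun j _ => hint i j]
  simp_rw [integral_finsetSum _ fun j _ => hint _ j, integral_const_mul, integral_mul_const,
    ← Finset.mul_sum]
  rfl

end InnerProductSpace

theorem continuous_gradient_of_contDiff {𝕜 F : Type*} [RCLike 𝕜] [NormedAddCommGroup F]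
    [InnerProductSpace 𝕜 F] [CompleteSpace F] {f : F → 𝕜} (hf : ContDiff 𝕜 1 f) :
    Continuous (gradient f) :=
  (InnerProductSpace.toDual 𝕜 F).symm.continuous.comp (hf.continuous_fderiv one_ne_zero)

section HomogenizedMatrix

variable {α ι : Type*} [MeasurableSpace α] {μ : Measure α} [DecidableEq ι]
  {G : ι → α → EuclideanSpace ℝ ι}

/-- The homogenized matrix `δᵢⱼ - ⨍ (Gⱼ)ᵢ dμ` of a family of vector fields `Gⱼ`. The matrix `M₀` of
a periodic cell problem on `Y` is obtained for `Gⱼ = ∇zⱼ` and `μ` the Lebesgue measure on `Y`. -/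
noncomputable def homogenizedMatrix (μ : Measure α) (G : ι → α → EuclideanSpace ℝ ι) :
    Matrix ι ι ℝ :=
  1 - Matrix.of fun i j => ⨍ y, G j y i ∂μ

theorem homogenizedMatrix_restrict_apply (Y : Set α) (i j : ι) :
    homogenizedMatrix (μ.restrict Y) G i j =
      (if i = j then 1 else 0) - (μ Y).toReal⁻¹ * ∫ y in Y, G j y i ∂μ := by
  rw [homogenizedMatrix, Matrix.sub_apply, Matrix.one_apply, Matrix.of_apply, setAverage_eq,
    smul_eq_mul, Measure.real]

variable [Fintype ι]

theorem measureReal_univ_mul_homogenizedMatrix_apply [IsFiniteMeasure μ] {j : ι}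
    (hG : Integrable (G j) μ) (i : ι) :
    μ.real Set.univ * homogenizedMatrix μ G i j =
      ∫ y, ⟪EuclideanSpace.single i 1, EuclideanSpace.single j 1 - G j y⟫ ∂μ := by
  have hcoord : Integrable (fun y => G j y i) μ := hG.eval_piLp i
  have haverage : μ.real Set.univ * ⨍ y, G j y i ∂μ = ∫ y, G j y i ∂μ :=
    measure_smul_average μ _
  simp_rw [inner_sub_right, EuclideanSpace.inner_single_left, map_one, one_mul]
  rw [integral_sub (integrable_const _) hcoord, ← haverage]
  simp [homogenizedMatrix, Matrix.one_apply, mul_sub]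

theorem measureReal_univ_smul_homogenizedMatrix [IsFiniteMeasure μ]
    (hG : ∀ i, MemLp (G i) 2 μ)
    (hcell : ∀ i j, ∫ y, ⟪G i y - EuclideanSpace.single i 1, G j y⟫ ∂μ = 0) :
    μ.real Set.univ • homogenizedMatrix μ G = Matrix.of fun i j =>
      ∫ y, ⟪EuclideanSpace.single i 1 - G i y, EuclideanSpace.single j 1 - G j y⟫ ∂μ := by
  ext i j
  have horth : ∫ y, ⟪G i y, EuclideanSpace.single j 1 - G j y⟫ ∂μ = 0 := by
    simp_rw [← neg_sub (G j _), inner_neg_right, real_inner_comm (G j _ - _)]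
    rw [integral_neg, hcell, neg_zero]
  rw [Matrix.smul_apply, smul_eq_mul, Matrix.of_apply,
    measureReal_univ_mul_homogenizedMatrix_apply ((hG j).integrable one_le_two)]
  exact (integral_inner_sub_left_of_integral_inner_eq_zero (memLp_const _) (hG i)
    ((memLp_const _).sub (hG j)) horth).symm

theorem norm_sum_smul_single_sub_sq (g : ι → EuclideanSpace ℝ ι) (ξ : ι → ℝ) :
    ‖∑ i, ξ i • (EuclideanSpace.single i 1 - g i)‖ ^ 2 =
      ∑ k, (ξ k - ∑ i, ξ i * g i k) ^ 2 := by
  simp [EuclideanSpace.real_norm_sq_eq, mul_sub, Finset.sum_sub_distrib, Pi.single_apply]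

theorem stmt_6_general [IsFiniteMeasure μ] (hG : ∀ i, MemLp (G i) 2 μ)
    (hcell : ∀ i j, ∫ y, ⟪G i y - EuclideanSpace.single i 1, G j y⟫ ∂μ = 0) (ξ : ι → ℝ) :
    ∫ y, ∑ k, (ξ k - ∑ i, ξ i * G i y k) ^ 2 ∂μ =
      μ.real Set.univ * (ξ ⬝ᵥ homogenizedMatrix μ G *ᵥ ξ) := by
  simp_rw [← norm_sum_smul_single_sub_sq]
  have hw (i : ι) : MemLp (fun y => EuclideanSpace.single i 1 - G i y) 2 μ :=
    (memLp_const _).sub (hG i)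
  rw [integral_norm_sum_smul_sq hw, ← measureReal_univ_smul_homogenizedMatrix hG hcell,
    Matrix.smul_mulVec, dotProduct_smul, smul_eq_mul]

end HomogenizedMatrix

theorem stmt_6 {d : ℕ} (Y : Set (EuclideanSpace ℝ (Fin d)))
    (hYm : MeasurableSet Y) (hYbd : Bornology.IsBounded Y) (hYpos : 0 < volume Y)
    (z : Fin d → EuclideanSpace ℝ (Fin d) → ℝ)
    (hz : ∀ i, ContDiff ℝ 1 (z i)) (hzper : ∀ i, ZdPeriodic (z i))
    (Cz : ℝ) (hzgb : ∀ i y, ‖gradient (z i) y‖ ≤ Cz)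
    (hcell : ∀ (i : Fin d) (φ : EuclideanSpace ℝ (Fin d) → ℝ),
      ContDiff ℝ 1 φ → ZdPeriodic φ → (∃ C, ∀ y, ‖gradient φ y‖ ≤ C) →
      (∫ y in Y, ⟪gradient (z i) y - EuclideanSpace.single i 1, gradient φ y⟫) = 0)
    (M₀ : Matrix (Fin d) (Fin d) ℝ)
    (hM₀ : ∀ i j, M₀ i j =
      (if i = j then (1:ℝ) else 0) - ((volume Y).toReal)⁻¹ * ∫ y in Y, gradient (z j) y i) :
    ∀ ξ : Fin d → ℝ,
      (∫ y in Y, ∑ k, (ξ k - ∑ i, ξ i * gradient (z i) y k)^2)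
        = (volume Y).toReal * ∑ i, (∑ j, M₀ i j * ξ j) * ξ i := by
  intro ξ
  have : IsFiniteMeasure (volume.restrict Y) :=
    isFiniteMeasure_restrict.mpr hYbd.measure_lt_top.ne
  have hgrad (i : Fin d) : MemLp (gradient (z i)) 2 (volume.restrict Y) :=
    .of_bound (continuous_gradient_of_contDiff (hz i)).aestronglyMeasurable Cz
      (ae_of_all _ (hzgb i))
  have hM₀' : M₀ = homogenizedMatrix (volume.restrict Y) fun i => gradient (z i) := by
    ext i j
    rw [hM₀, homogenizedMatrix_restrict_apply]
  have henergy := stmt_6_general hgrad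
    (fun i j => hcell i (z j) (hz j) (hzper j) ⟨Cz, hzgb j⟩) ξ
  rwa [← hM₀', measureReal_restrict_apply_univ, dotProduct_comm] at henergy
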